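/- arXiv:math/9811026 — 2 statements merged into one kernel-verified Lean document; each statement's English description precedes it below -/
import Mathlib

section
/- For every integer i ≥ 2 and every x in the neighborhood of 0, the series Σ_{k≥0} (-1)^{i+k} · y(x)^k / ((i+k-1)!·k!) converges and equals f_i(x); that is, f_i(x) = Σ_{k=0}^{∞} (-1)^{i+k} y(x)^k / ((i+k-1)!·k!). -/
/-- The sequence of functions `f_1 = 1 - 1/y'`, `f_{i+1} = f_i'/y'`. -/
noncomputable def fseq (y : ℝ → ℝ) : ℕ → ℝ → ℝ
  | 0 => fun _ => 0
  | 1 => fun x => 1 - 1 / deriv y x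
  | (n + 2) => fun x => deriv (fseq y (n + 1)) x / deriv y x

/-!
Write `C n z = ∑ z ^ k / (k! (n + k)!)`. Then `(C n)' = C (n + 1)`, and the series `u` in the
functional equation is `u z = z * C 1 (-z)`, so that `u' z = C 0 (-z)`. Differentiating
`u (y x) = x` gives `1 / y' = C 0 (-y)`, hence `f₁ = 1 - C 0 (-y)`. Since `(1 / y') d/dx` acts on
functions of `y` as `d/dy`, each further step raises the index of `C` by one and changes the sign.
-/

open Filter FormalMultilinearSeries Topology
open scoped Nat

theorem hasSum_deriv_of_hasFPowerSeriesOnBall {𝕜 F : Type*} [NontriviallyNormedField 𝕜]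
    [NormedAddCommGroup F] [NormedSpace 𝕜 F] [CompleteSpace F] {f : 𝕜 → F}
    {p : FormalMultilinearSeries 𝕜 𝕜 F} {x z : 𝕜} {r : ENNReal}
    (hf : HasFPowerSeriesOnBall f p x r) (hz : z ∈ Metric.eball 0 r) :
    HasSum (fun k : ℕ ↦ z ^ k • (k + 1) • p.coeff (k + 1)) (deriv f (x + z)) := by
  have h := (hf.fderiv.hasSum hz).mapL (ContinuousLinearMap.apply 𝕜 F 1)
  simpa [apply_eq_pow_smul_coeff] using h

section BesselClifford

variable {𝕜 : Type*} [RCLike 𝕜] (n : ℕ) (z : 𝕜)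

variable (𝕜) in
/-- The Taylor coefficients at `0` of the Bessel–Clifford function `besselClifford n`. -/
noncomputable def besselCliffordCoeff (k : ℕ) : 𝕜 :=
  ((k ! : 𝕜) * ((n + k)! : 𝕜))⁻¹

/-- The Bessel–Clifford function `C_n(z) = ∑ z ^ k / (k! (n + k)!)`, a regularized hypergeometric
function `₀F₁`. It is related to the Bessel function by `J_n(2 √z) = z ^ (n / 2) C_n(-z)`, and
expresses both the series inverted by `y` and the functions `f_i`. -/
noncomputable def besselClifford : 𝕜 → 𝕜 :=
  ofScalarsSum (besselCliffordCoeff 𝕜 n)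

theorem norm_besselCliffordCoeff_le (k : ℕ) : ‖besselCliffordCoeff 𝕜 n k‖ ≤ (k ! : ℝ)⁻¹ := by
  rw [besselCliffordCoeff, norm_inv, norm_mul, RCLike.norm_natCast, RCLike.norm_natCast]
  gcongr
  exact le_mul_of_one_le_right (by positivity) (mod_cast (n + k).factorial_pos)

theorem succ_mul_besselCliffordCoeff_succ (k : ℕ) :
    (k + 1 : 𝕜) * besselCliffordCoeff 𝕜 n (k + 1) = besselCliffordCoeff 𝕜 (n + 1) k := by
  have hk : (k + 1 : 𝕜) ≠ 0 := Nat.cast_add_one_ne_zero k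
  rw [besselCliffordCoeff, besselCliffordCoeff, Nat.factorial_succ, ← add_assoc,
    Nat.add_right_comm]
  push_cast
  field_simp

theorem add_mul_besselCliffordCoeff_succ (k : ℕ) :
    (n + 1 + k : 𝕜) * besselCliffordCoeff 𝕜 (n + 1) k = besselCliffordCoeff 𝕜 n k := by
  have hnk : (n + k + 1 : 𝕜) ≠ 0 := mod_cast (n + k).succ_ne_zero
  rw [besselCliffordCoeff, besselCliffordCoeff, Nat.add_right_comm, Nat.factorial_succ,
    add_right_comm]
  push_cast
  field_simp

theorem radius_ofScalars_besselCliffordCoeff_eq_top :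
    (ofScalars 𝕜 (besselCliffordCoeff 𝕜 n)).radius = ⊤ := by
  refine radius_eq_top_of_summable_norm _ fun r ↦
    (Real.summable_pow_div_factorial r).of_nonneg_of_le (fun k ↦ by positivity) fun k ↦ ?_
  rw [ofScalars_norm, div_eq_inv_mul]
  gcongr
  exact norm_besselCliffordCoeff_le n k

theorem hasFPowerSeriesOnBall_besselClifford :
    HasFPowerSeriesOnBall (besselClifford n) (ofScalars 𝕜 (besselCliffordCoeff 𝕜 n)) 0 ⊤ := by
  have hr := radius_ofScalars_besselCliffordCoeff_eq_top (𝕜 := 𝕜) n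
  exact hr ▸ FormalMultilinearSeries.hasFPowerSeriesOnBall _ (hr ▸ ENNReal.zero_lt_top)

theorem hasSum_besselClifford :
    HasSum (fun k ↦ besselCliffordCoeff 𝕜 n k * z ^ k) (besselClifford n z) := by
  simpa [mul_comm] using
    (hasFPowerSeriesOnBall_besselClifford (𝕜 := 𝕜) n).hasSum (y := z) (by simp)

theorem hasDerivAt_besselClifford :
    HasDerivAt (besselClifford n) (besselClifford (n + 1) z) z := by
  have hf := hasFPowerSeriesOnBall_besselClifford (𝕜 := 𝕜) n
  have hsum : HasSum (fun k ↦ besselCliffordCoeff 𝕜 (n + 1) k * z ^ k)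
      (deriv (besselClifford n) z) := by
    have h := hasSum_deriv_of_hasFPowerSeriesOnBall hf (z := z) (by simp)
    simpa [← succ_mul_besselCliffordCoeff_succ, mul_comm] using h
  rw [(hasSum_besselClifford (n + 1) z).unique hsum]
  exact (hf.analyticAt_of_mem (by simp)).differentiableAt.hasDerivAt

theorem add_one_mul_besselClifford_add_mul_besselClifford :
    (n + 1) * besselClifford (n + 1) z + z * besselClifford (n + 2) z = besselClifford n z := by
  have hshift : HasSum (fun k : ℕ ↦ k * (besselCliffordCoeff 𝕜 (n + 1) k * z ^ k))
      (z * besselClifford (n + 2) z) := by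
    rw [← hasSum_nat_add_iff' 1, Finset.sum_range_one, Nat.cast_zero, zero_mul, sub_zero]
    convert! (hasSum_besselClifford (n + 2) z).mul_left z using 2 with k
    rw [← succ_mul_besselCliffordCoeff_succ (n + 1) k]
    push_cast
    ring
  refine (((hasSum_besselClifford (n + 1) z).mul_left (n + 1 : 𝕜)).add hshift).unique ?_
  convert! hasSum_besselClifford n z using 2 with k
  rw [← add_mul_besselCliffordCoeff_succ n k]
  ring

theorem hasDerivAt_pow_mul_besselClifford :
    HasDerivAt (fun w ↦ w ^ (n + 1) * besselClifford (n + 1) w) (z ^ n * besselClifford n z) z := by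
  refine ((hasDerivAt_pow (n + 1) z).mul (hasDerivAt_besselClifford (n + 1) z)).congr_deriv ?_
  rw [← add_one_mul_besselClifford_add_mul_besselClifford n z, Nat.add_sub_cancel]
  push_cast
  ring

theorem hasDerivAt_besselClifford_neg :
    HasDerivAt (fun w ↦ besselClifford n (-w)) (-besselClifford (n + 1) (-z)) z := by
  simpa [Function.comp_def] using (hasDerivAt_besselClifford n (-z)).comp z (hasDerivAt_neg z)

theorem hasDerivAt_mul_besselClifford_neg :
    HasDerivAt (fun w ↦ w * besselClifford 1 (-w)) (besselClifford 0 (-z)) z := by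
  simpa [Function.comp_def] using
    ((hasDerivAt_pow_mul_besselClifford 0 (-z)).comp z (hasDerivAt_neg z)).fun_neg

theorem tsum_eq_mul_besselClifford_neg :
    ∑' k : ℕ, (-1 : 𝕜) ^ k * z ^ (k + 1) / ((k ! : 𝕜) * ((k + 1)! : 𝕜)) =
      z * besselClifford 1 (-z) := by
  refine (((hasSum_besselClifford 1 (-z)).mul_left z).congr_fun fun k ↦ ?_).tsum_eq
  rw [besselCliffordCoeff, neg_pow, add_comm 1 k]
  ring

end BesselClifford

section RightInverse

variable {U : Set ℝ} {y : ℝ → ℝ} {x : ℝ}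

theorem besselClifford_zero_mul_deriv_eq_one (hy : DifferentiableAt ℝ y x)
    (hinv : ∀ᶠ t in 𝓝 x, y t * besselClifford 1 (-y t) = t) :
    besselClifford 0 (-y x) * deriv y x = 1 :=
  ((hasDerivAt_mul_besselClifford_neg (y x)).comp x hy.hasDerivAt).unique
    ((hasDerivAt_id x).congr_of_eventuallyEq hinv)

theorem fseq_add_two_of_eventuallyEq_comp {n : ℕ} {F : ℝ → ℝ} {F' : ℝ}
    (hF : HasDerivAt F F' (y x)) (hy : deriv y x ≠ 0) (h : fseq y (n + 1) =ᶠ[𝓝 x] F ∘ y) :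
    fseq y (n + 2) x = F' := by
  have hd := hF.comp x (differentiableAt_of_deriv_ne_zero hy).hasDerivAt
  simp only [fseq, h.deriv_eq, hd.deriv, mul_div_cancel_right₀ _ hy]

theorem eqOn_fseq_add_two (hU : IsOpen U) (hy : DifferentiableOn ℝ y U)
    (hinv : ∀ t ∈ U, y t * besselClifford 1 (-y t) = t) (n : ℕ) :
    Set.EqOn (fseq y (n + 2)) (fun t ↦ (-1) ^ n * besselClifford (n + 1) (-y t)) U := by
  have hC0 : ∀ t ∈ U, besselClifford 0 (-y t) * deriv y t = 1 := fun t ht ↦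
    besselClifford_zero_mul_deriv_eq_one (hy.differentiableAt (hU.mem_nhds ht))
      (eventually_of_mem (hU.mem_nhds ht) hinv)
  have hy' : ∀ t ∈ U, deriv y t ≠ 0 := fun t ht ↦ right_ne_zero_of_mul_eq_one (hC0 t ht)
  induction n with
  | zero =>
    have hone : Set.EqOn (fseq y 1) ((fun w ↦ 1 - besselClifford 0 (-w)) ∘ y) U := fun t ht ↦ by
      simp only [fseq, Function.comp_apply, eq_one_div_of_mul_eq_one_left (hC0 t ht)]
    intro x hx
    simpa using fseq_add_two_of_eventuallyEq_comp
      ((hasDerivAt_besselClifford_neg 0 (y x)).const_sub 1) (hy' x hx)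
      (hone.eventuallyEq_of_mem (hU.mem_nhds hx))
  | succ n ih =>
    intro x hx
    have hstep := fseq_add_two_of_eventuallyEq_comp
      ((hasDerivAt_besselClifford_neg (n + 1) (y x)).const_mul ((-1) ^ n)) (hy' x hx)
      (ih.eventuallyEq_of_mem (hU.mem_nhds hx))
    simpa [pow_succ] using hstep

end RightInverse

theorem stmt2_general {U : Set ℝ} (hU : IsOpen U) {y : ℝ → ℝ} (hy : DifferentiableOn ℝ y U)
    (hfun : ∀ x ∈ U, x = ∑' k : ℕ, (-1 : ℝ) ^ k * y x ^ (k + 1) / ((k ! : ℝ) * ((k + 1)! : ℝ)))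
    {i : ℕ} (hi : 2 ≤ i) {x : ℝ} (hx : x ∈ U) :
    HasSum (fun k : ℕ ↦ (-1 : ℝ) ^ (i + k) * y x ^ k / (((i + k - 1)! : ℝ) * (k ! : ℝ)))
      (fseq y i x) := by
  obtain ⟨n, rfl⟩ := Nat.exists_eq_add_of_le' hi
  have hinv : ∀ t ∈ U, y t * besselClifford 1 (-y t) = t := fun t ht ↦
    (tsum_eq_mul_besselClifford_neg (y t)).symm.trans (hfun t ht).symm
  rw [eqOn_fseq_add_two hU hy hinv n hx]
  convert! (hasSum_besselClifford (n + 1) (-y x)).mul_left ((-1) ^ n) using 2 with k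
  rw [besselCliffordCoeff, neg_pow (y x), show n + 2 + k - 1 = n + 1 + k by lia]
  ring

theorem stmt2
    (U : Set ℝ) (hU : IsOpen U) (h0U : (0 : ℝ) ∈ U)
    (y : ℝ → ℝ) (hy : AnalyticOnNhd ℝ y U)
    (hy0 : y 0 = 0) (hy'0 : deriv y 0 = 1)
    (hfun : ∀ x ∈ U, x = ∑' k : ℕ, (-1 : ℝ) ^ k * y x ^ (k + 1) /
      ((Nat.factorial k : ℝ) * (Nat.factorial (k + 1) : ℝ)))
    (hy' : ∀ x ∈ U, deriv y x ≠ 0) :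
    ∀ i : ℕ, 2 ≤ i → ∀ x ∈ U,
      HasSum (fun k : ℕ => (-1 : ℝ) ^ (i + k) * y x ^ k /
          ((Nat.factorial (i + k - 1) : ℝ) * (Nat.factorial k : ℝ)))
        (fseq y i x) := by
  intro i hi x hx
  exact stmt2_general hU hy.differentiableOn hfun hi hx
end

section
/- The values of the functions f_i at x = 0 are: f_1(0) = 0, and f_i(0) = (-1)^i / (i-1)! for every integer i ≥ 2. -/
/-!
Dividing the derivative of `g ∘ y` by `y'` gives `g' ∘ y`, so the recursion for `f_i` is ordinary
differentiation in the variable `y`. Writing the functional equation as `u ∘ y = id` gives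
`1 / y' = u' ∘ y`, so the recursion starts at `f_1 = (id - u)' ∘ y`. Hence
`f_i = (id - u)^(i) ∘ y`, and the value at `0` is `i!` times a Taylor coefficient of `id - u`.
-/

open Set Filter Topology
open FormalMultilinearSeries (ofScalars ofScalarsSum ofScalars_norm ofScalars_series_injective
  ofScalars_sum_eq radius_eq_top_of_summable_norm)
open scoped Nat ContDiff

section NontriviallyNormedField

variable {𝕜 : Type*} [NontriviallyNormedField 𝕜]

theorem deriv_comp_div_deriv {g y : 𝕜 → 𝕜} {x : 𝕜} (hg : DifferentiableAt 𝕜 g (y x))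
    (hy : deriv y x ≠ 0) : deriv (g ∘ y) x / deriv y x = deriv g (y x) := by
  rw [deriv_comp x hg (differentiableAt_of_deriv_ne_zero hy), mul_div_cancel_right₀ _ hy]

theorem deriv_mul_deriv_eq_one_of_eventually_leftInverse {u y : 𝕜 → 𝕜} {x : 𝕜}
    (hu : DifferentiableAt 𝕜 u (y x)) (hy : DifferentiableAt 𝕜 y x)
    (huy : ∀ᶠ t in 𝓝 x, u (y t) = t) : deriv u (y x) * deriv y x = 1 := by
  have hid : u ∘ y =ᶠ[𝓝 x] id := huy
  rw [← deriv_comp x hu hy, hid.deriv_eq, deriv_id]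

theorem iteratedDeriv_eq_factorial_mul_of_hasFPowerSeriesAt [CompleteSpace 𝕜] [CharZero 𝕜]
    {f : 𝕜 → 𝕜} {c : ℕ → 𝕜} {x : 𝕜} (hf : HasFPowerSeriesAt f (ofScalars 𝕜 c) x) (n : ℕ) :
    iteratedDeriv n f x = n ! * c n := by
  have hc : (fun k ↦ iteratedDeriv k f x / k !) = c :=
    ofScalars_series_injective 𝕜 𝕜 (hf.analyticAt.hasFPowerSeriesAt.eq_formalMultilinearSeries hf)
  rw [← congrFun hc n, mul_div_cancel₀ _ (Nat.cast_ne_zero.mpr n.factorial_ne_zero)]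

theorem radius_ofScalars_eq_top_of_norm_le_inv_factorial {c : ℕ → 𝕜}
    (hc : ∀ n, ‖c n‖ ≤ (n ! : ℝ)⁻¹) : (ofScalars 𝕜 c).radius = ⊤ := by
  refine radius_eq_top_of_summable_norm _ fun r ↦ .of_nonneg_of_le (fun n ↦ by positivity)
    (fun n ↦ ?_) (Real.summable_pow_div_factorial r)
  rw [ofScalars_norm, div_eq_inv_mul]
  gcongr
  exact hc n

end NontriviallyNormedField

theorem fseq_eqOn_iteratedDeriv_comp {U : Set ℝ} {u y : ℝ → ℝ} (hU : IsOpen U) {n : ℕ}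
    (hu : ContDiff ℝ (n + 1) u) (hy : DifferentiableOn ℝ y U) (huy : LeftInvOn u y U) :
    EqOn (fseq y (n + 1)) (iteratedDeriv (n + 1) (id - u) ∘ y) U := by
  have hmul (x) (hx : x ∈ U) : deriv u (y x) * deriv y x = 1 :=
    deriv_mul_deriv_eq_one_of_eventually_leftInverse (hu.differentiable (by simp) _)
      (hy.differentiableAt (hU.mem_nhds hx)) (eventually_of_mem (hU.mem_nhds hx) huy)
  induction n with
  | zero =>
    intro x hx
    have hderiv : deriv (id - u) (y x) = 1 - deriv u (y x) := by
      rw [deriv_sub differentiableAt_id (hu.differentiable (by simp) _), deriv_id]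
    rw [Function.comp_apply, iteratedDeriv_one, hderiv,
      eq_one_div_of_mul_eq_one_left (hmul x hx)]
    rfl
  | succ n ih =>
    intro x hx
    have hg : ContDiff ℝ (n + 1 + 1) (id - u) := contDiff_id.sub hu
    calc fseq y (n + 1 + 1) x
        = deriv (fseq y (n + 1)) x / deriv y x := rfl
      _ = deriv (iteratedDeriv (n + 1) (id - u) ∘ y) x / deriv y x := by
          rw [(ih (hu.of_le (by simp))).deriv hU hx]
      _ = deriv (iteratedDeriv (n + 1) (id - u)) (y x) :=
          deriv_comp_div_deriv (hg.differentiable_iteratedDeriv' (n + 1) _)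
            (right_ne_zero_of_mul_eq_one (hmul x hx))
      _ = iteratedDeriv (n + 1 + 1) (id - u) (y x) :=
          (congrFun iteratedDeriv_succ _).symm

/-- The Taylor coefficients at `0` of the entire function `u(z) = -√z J₀'(2√z)`, indexed
from `k + 1` so that the factorial `(n - 1)!` involves no truncated subtraction. -/
noncomputable def sqrtBesselCoeff : ℕ → ℝ
  | 0 => 0
  | k + 1 => (-1) ^ k / (k ! * (k + 1)!)

/-- The entire function `u(z) = -√z J₀'(2√z) = √z J₁(2√z)`, encoded by its power series at `0`
so that it is defined for negative `z` as well. -/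
noncomputable def sqrtBessel : ℝ → ℝ :=
  ofScalarsSum sqrtBesselCoeff

theorem sqrtBessel_eq_tsum (z : ℝ) :
    sqrtBessel z = ∑' k : ℕ, (-1) ^ k * z ^ (k + 1) / (k ! * (k + 1)!) := by
  have hsupport : Function.support (fun n ↦ sqrtBesselCoeff n * z ^ n) ⊆ range Nat.succ := by
    rintro (_ | k) hk
    · simp [sqrtBesselCoeff] at hk
    · exact mem_range_self k
  calc sqrtBessel z = ∑' n, sqrtBesselCoeff n * z ^ n := ofScalars_sum_eq sqrtBesselCoeff z
    _ = ∑' k : ℕ, sqrtBesselCoeff (k + 1) * z ^ (k + 1) :=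
        (Nat.succ_injective.tsum_eq hsupport).symm
    _ = ∑' k : ℕ, (-1) ^ k * z ^ (k + 1) / (k ! * (k + 1)!) :=
        tsum_congr fun k ↦ div_mul_eq_mul_div _ _ _

theorem hasFPowerSeriesOnBall_sqrtBessel :
    HasFPowerSeriesOnBall sqrtBessel (ofScalars ℝ sqrtBesselCoeff) 0 ⊤ := by
  have hbound (n : ℕ) : ‖sqrtBesselCoeff n‖ ≤ (n ! : ℝ)⁻¹ := by
    cases n with
    | zero => simp [sqrtBesselCoeff]
    | succ k =>
      have hk : (1 : ℝ) ≤ k ! := mod_cast k.factorial_pos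
      calc ‖sqrtBesselCoeff (k + 1)‖ = 1 / (k ! * (k + 1)!) := by simp [sqrtBesselCoeff]
        _ ≤ 1 / (k + 1)! := by gcongr; exact le_mul_of_one_le_left (by positivity) hk
        _ = ((k + 1)! : ℝ)⁻¹ := one_div _
  have hradius := radius_ofScalars_eq_top_of_norm_le_inv_factorial hbound
  exact hradius ▸ (ofScalars ℝ sqrtBesselCoeff).hasFPowerSeriesOnBall (by simp [hradius])

theorem contDiff_sqrtBessel {n : ℕ∞ω} : ContDiff ℝ n sqrtBessel :=
  contDiff_iff_contDiffAt.mpr fun _ ↦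
    (hasFPowerSeriesOnBall_sqrtBessel.analyticAt_of_mem (by simp)).contDiffAt

theorem iteratedDeriv_succ_sqrtBessel_zero (k : ℕ) :
    iteratedDeriv (k + 1) sqrtBessel 0 = (-1) ^ k / k ! := by
  rw [iteratedDeriv_eq_factorial_mul_of_hasFPowerSeriesAt
    hasFPowerSeriesOnBall_sqrtBessel.hasFPowerSeriesAt, sqrtBesselCoeff]
  field_simp

theorem stmt4
    (U : Set ℝ) (hU : IsOpen U) (h0U : (0 : ℝ) ∈ U)
    (y : ℝ → ℝ) (hy : AnalyticOnNhd ℝ y U)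
    (hy0 : y 0 = 0) (hy'0 : deriv y 0 = 1)
    (hfun : ∀ x ∈ U, x = ∑' k : ℕ, (-1 : ℝ) ^ k * y x ^ (k + 1) /
      ((Nat.factorial k : ℝ) * (Nat.factorial (k + 1) : ℝ)))
    (hy' : ∀ x ∈ U, deriv y x ≠ 0) :
    fseq y 1 0 = 0 ∧
      ∀ i : ℕ, 2 ≤ i → fseq y i 0 = (-1 : ℝ) ^ i / (Nat.factorial (i - 1) : ℝ) := by
  have huy : LeftInvOn sqrtBessel y U := fun x hx ↦ by
    rw [sqrtBessel_eq_tsum, ← hfun x hx]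
  refine ⟨by simp [fseq, hy'0], fun i hi ↦ ?_⟩
  obtain ⟨n, rfl⟩ := Nat.exists_eq_add_of_le' hi
  calc fseq y (n + 2) 0
      = iteratedDeriv (n + 2) (id - sqrtBessel) 0 := by
        rw [fseq_eqOn_iteratedDeriv_comp hU contDiff_sqrtBessel hy.differentiableOn huy h0U,
          Function.comp_apply, hy0]
    _ = -iteratedDeriv (n + 2) sqrtBessel 0 := by
        rw [iteratedDeriv_sub contDiffAt_id contDiff_sqrtBessel.contDiffAt, iteratedDeriv_id]
        simp
    _ = (-1) ^ (n + 2) / (n + 1)! := by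
        rw [iteratedDeriv_succ_sqrtBessel_zero]
        ring
end
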